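/- Let H and K be cosemisimple Hopf algebras over an algebraically closed field with a semiring isomorphism f : R_+(H) → R_+(K), and let [X] ∈ R_+(H) with dim X > dim f(X). Then for every n ≥ 1 there exists a simple H-comodule S_n that is a direct summand of X^{⊗n} and satisfies dim S_n ≥ (dim X / dim f(X))^n. -/

import Mathlib

/-!
Background definitions: comodules over a Hopf algebra, simple comodules, direct
summands, supports, subcoalgebras, cosemisimplicity, Gelfand-Kirillov dimension,
and (measured) Grothendieck semirings of cosemisimple Hopf algebras.
-/

open TensorProduct

/-- The data of a coaction of a Hopf algebra `H` on a `k`-vector space `X`: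
a linear map `ρ : X → X ⊗ H`.  The comodule axioms are recorded separately in
`Comod.IsComodule`. -/
structure Comod (k : Type) [Field k] (H : Type) [Ring H] [HopfAlgebra k H] : Type 1 where
  X : Type
  [addCommGroup : AddCommGroup X]
  [module : Module k X]
  ρ : X →ₗ[k] X ⊗[k] H

attribute [instance] Comod.addCommGroup Comod.module

namespace Comod

variable {k : Type} [Field k] {H : Type} [Ring H] [HopfAlgebra k H]

/-- The trivial `H`-comodule `𝟏`, i.e. `k` with coaction `x ↦ x ⊗ 1`. -/
noncomputable def unit (k : Type) [Field k] (H : Type) [Ring H] [HopfAlgebra k H] :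
    Comod k H where
  X := k
  ρ := (TensorProduct.mk k k H).flip 1

/-- The regular comodule: `H` coacting on itself by comultiplication. -/
noncomputable def regular (k : Type) [Field k] (H : Type) [Ring H] [HopfAlgebra k H] :
    Comod k H where
  X := H
  ρ := Coalgebra.comul

/-- Tensor product of comodules: the coaction on `M ⊗ N` is
`(id ⊗ id ⊗ μ_H) ∘ (id ⊗ τ ⊗ id) ∘ (ρ_M ⊗ ρ_N)`. -/
noncomputable def tensor (M N : Comod k H) : Comod k H where
  X := M.X ⊗[k] N.X
  ρ := (LinearMap.mul' k H).lTensor (M.X ⊗[k] N.X)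
        ∘ₗ (TensorProduct.tensorTensorTensorComm k M.X H N.X H).toLinearMap
        ∘ₗ TensorProduct.map M.ρ N.ρ

/-- Binary direct sum of comodules. -/
noncomputable def dsum (M N : Comod k H) : Comod k H where
  X := M.X × N.X
  ρ := (LinearMap.inl k M.X N.X).rTensor H ∘ₗ M.ρ ∘ₗ LinearMap.fst k M.X N.X
     + (LinearMap.inr k M.X N.X).rTensor H ∘ₗ N.ρ ∘ₗ LinearMap.snd k M.X N.X

/-- Finite direct sum of a family of comodules. -/
noncomputable def pi {ι : Type} [Fintype ι] (S : ι → Comod k H) : Comod k H where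
  X := ∀ i, (S i).X
  ρ := letI := Classical.decEq ι
    ∑ i : ι, (LinearMap.single k (fun j => (S j).X) i).rTensor H ∘ₗ (S i).ρ
        ∘ₗ LinearMap.proj i

/-- `n`-th tensor power of a comodule (`M^{⊗0} = 𝟏`, `M^{⊗1} = M`). -/
noncomputable def tpow (M : Comod k H) : ℕ → Comod k H
  | 0 => unit k H
  | 1 => M
  | n + 2 => (M.tpow (n + 1)).tensor M

/-- A linear map is a map of comodules if it intertwines the coactions. -/
def IsHom (M N : Comod k H) (f : M.X →ₗ[k] N.X) : Prop :=
  N.ρ ∘ₗ f = f.rTensor H ∘ₗ M.ρ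

/-- Isomorphism of comodules. -/
def Iso (M N : Comod k H) : Prop :=
  ∃ e : M.X ≃ₗ[k] N.X, IsHom M N e.toLinearMap

/-- The comodule axioms (coassociativity and counitality) for a coaction. -/
def IsComodule (M : Comod k H) : Prop :=
  (M.ρ.rTensor H ∘ₗ M.ρ =
      (TensorProduct.assoc k M.X H H).symm.toLinearMap
        ∘ₗ (Coalgebra.comul (R := k) (A := H)).lTensor M.X ∘ₗ M.ρ) ∧
  (TensorProduct.rid k M.X).toLinearMap
      ∘ₗ (Coalgebra.counit (R := k) (A := H)).lTensor M.X ∘ₗ M.ρ = LinearMap.id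

/-- A subspace `N ⊆ M` is a subcomodule if the coaction restricts to `N ⊗ H`. -/
def IsSubcomodule (M : Comod k H) (N : Submodule k M.X) : Prop :=
  ∀ x ∈ N, M.ρ x ∈ LinearMap.range (N.subtype.rTensor H)

/-- Simple (hence finite-dimensional) comodules. -/
def IsSimple (M : Comod k H) : Prop :=
  M.IsComodule ∧ Nontrivial M.X ∧ FiniteDimensional k M.X ∧
    ∀ N : Submodule k M.X, M.IsSubcomodule N → N = ⊥ ∨ N = ⊤

/-- `S` is a direct summand of `M` (as comodules): the inclusion splits. -/
def DirectSummand (S M : Comod k H) : Prop :=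
  ∃ (i : S.X →ₗ[k] M.X) (p : M.X →ₗ[k] S.X),
    IsHom S M i ∧ IsHom M S p ∧ p ∘ₗ i = LinearMap.id

/-- `C` is the support of the comodule `M`: the (unique) minimal subspace
`C ⊆ H` with `ρ(M) ⊆ M ⊗ C`. -/
def IsSupport (M : Comod k H) (C : Submodule k H) : Prop :=
  (∀ x : M.X, M.ρ x ∈ LinearMap.range (C.subtype.lTensor M.X)) ∧
    ∀ C' : Submodule k H,
      (∀ x : M.X, M.ρ x ∈ LinearMap.range (C'.subtype.lTensor M.X)) → C ≤ C'

end Comod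

/-- A subspace `C ⊆ H` is a subcoalgebra if `Δ(C) ⊆ C ⊗ C`. -/
def IsSubcoalgebra (k : Type) [Field k] (H : Type) [Ring H] [HopfAlgebra k H]
    (C : Submodule k H) : Prop :=
  ∀ x ∈ C, Coalgebra.comul (R := k) x ∈
    LinearMap.range (TensorProduct.map C.subtype C.subtype)

/-- A simple subcoalgebra: a nonzero subcoalgebra with no proper nonzero
subcoalgebras. -/
def IsSimpleSubcoalgebra (k : Type) [Field k] (H : Type) [Ring H] [HopfAlgebra k H]
    (C : Submodule k H) : Prop :=
  IsSubcoalgebra k H C ∧ C ≠ ⊥ ∧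
    ∀ D : Submodule k H, D ≤ C → IsSubcoalgebra k H D → D = ⊥ ∨ D = C

/-- A Hopf algebra is cosemisimple if every subcomodule of every comodule is a
direct summand. -/
def IsCosemisimple (k : Type) [Field k] (H : Type) [Ring H] [HopfAlgebra k H] : Prop :=
  ∀ M : Comod k H, M.IsComodule →
    ∀ N : Submodule k M.X, M.IsSubcomodule N →
      ∃ N' : Submodule k M.X, M.IsSubcomodule N' ∧ IsCompl N N'

open scoped ENNReal in
/-- The Gelfand-Kirillov dimension of a `k`-algebra `A`:
`sup_V limsup_n log(dim V^n)/log n` over finite-dimensional subspaces `V ⊆ A`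
(for a finitely generated algebra this agrees with the value computed from any
finite-dimensional generating subspace containing `1`). -/
noncomputable def GKdim (k : Type) (A : Type) [Field k] [Ring A] [Algebra k A] : ℝ≥0∞ :=
  ⨆ (V : Submodule k A) (_ : FiniteDimensional k V),
    Filter.limsup
      (fun n : ℕ => ENNReal.ofReal
        (Real.log (Module.finrank k ↥(V ^ n)) / Real.log n)) Filter.atTop

/-- The (measured) Grothendieck semiring of a cosemisimple Hopf algebra `H`:
a commutative semiring `R` together with a class map `cls` on finite-dimensional
`H`-comodules which is constant on isomorphism classes, additive on direct sums,
multiplicative on tensor products, sends `𝟏` to `1`, and induces a bijection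
between iso-classes of finite-dimensional comodules and elements of `R`.
The dimension function `d_H` on `R_+(H)` is recovered as `cls M ↦ dim_k M`. -/
structure GrSemiring (k : Type) [Field k] (H : Type) [Ring H] [HopfAlgebra k H] :
    Type 1 where
  R : Type
  [commSemiring : CommSemiring R]
  cls : Comod k H → R
  cls_one : cls (Comod.unit k H) = 1
  cls_iso : ∀ M N : Comod k H, M.IsComodule → N.IsComodule →
    FiniteDimensional k M.X → FiniteDimensional k N.X → Comod.Iso M N → cls M = cls N
  cls_dsum : ∀ M N : Comod k H, M.IsComodule → N.IsComodule →
    FiniteDimensional k M.X → FiniteDimensional k N.X →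
      cls (M.dsum N) = cls M + cls N
  cls_tensor : ∀ M N : Comod k H, M.IsComodule → N.IsComodule →
    FiniteDimensional k M.X → FiniteDimensional k N.X →
      cls (M.tensor N) = cls M * cls N
  cls_surj : ∀ r : R, ∃ M : Comod k H, M.IsComodule ∧ FiniteDimensional k M.X ∧ cls M = r
  cls_inj : ∀ M N : Comod k H, M.IsComodule → N.IsComodule →
    FiniteDimensional k M.X → FiniteDimensional k N.X → cls M = cls N → Comod.Iso M N

attribute [instance] GrSemiring.commSemiring

/-!
Let `w` be the dimension function of `R_+(K)` pulled back along `f`. It is additive, multiplicative,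
and at least `1` on every nonzero class, so `X^{⊗ n}` has at most `w(X)^n = (dim f(X))^n` simple
summands, whereas its dimension is `(dim X)^n`. Hence the largest simple summand has dimension at
least `(dim X / dim f(X))^n`.
-/

namespace Comod

/-! ### Tensoring with a bialgebra -/

section TensorMul

variable {R A B V W V' W' : Type*} [CommSemiring R] [Semiring A] [Algebra R A]
  [Semiring B] [Algebra R B] [AddCommMonoid V] [Module R V] [AddCommMonoid W] [Module R W]
  [AddCommMonoid V'] [Module R V'] [AddCommMonoid W'] [Module R W']

variable (R A V W) in
/-- The map `(v ⊗ a) ⊗ (w ⊗ b) ↦ (v ⊗ w) ⊗ ab`, through which the coaction on a tensor product of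
comodules factors. The algebra `A` is arbitrary, so that it can also be `H ⊗ H` or the ground ring
when the comodule axioms are checked. -/
noncomputable def tensorMul : (V ⊗[R] A) ⊗[R] (W ⊗[R] A) →ₗ[R] (V ⊗[R] W) ⊗[R] A :=
  (LinearMap.mul' R A).lTensor (V ⊗[R] W)
    ∘ₗ (TensorProduct.tensorTensorTensorComm R V A W A).toLinearMap

@[simp]
theorem tensorMul_tmul (v : V) (w : W) (a b : A) :
    tensorMul R A V W ((v ⊗ₜ a) ⊗ₜ (w ⊗ₜ b)) = (v ⊗ₜ w) ⊗ₜ (a * b) := by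
  simp [tensorMul]

theorem rTensor_map_comp_tensorMul (f : V →ₗ[R] V') (g : W →ₗ[R] W') :
    (TensorProduct.map f g).rTensor A ∘ₗ tensorMul R A V W =
      tensorMul R A V' W' ∘ₗ TensorProduct.map (f.rTensor A) (g.rTensor A) := by
  ext
  simp

theorem lTensor_comp_tensorMul (φ : A →ₐ[R] B) :
    φ.toLinearMap.lTensor (V ⊗[R] W) ∘ₗ tensorMul R A V W =
      tensorMul R B V W ∘ₗ
        TensorProduct.map (φ.toLinearMap.lTensor V) (φ.toLinearMap.lTensor W) := by
  ext
  simp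

end TensorMul

section Coalgebra

variable {R C V W : Type*} [CommSemiring R] [AddCommMonoid C] [Module R C] [Coalgebra R C]
  [AddCommMonoid V] [Module R V] [AddCommMonoid W] [Module R W]

variable (R C V) in
/-- The map `id_V ⊗ Δ`, reassociated to take values in `(V ⊗ C) ⊗ C`; composed with a coaction it is
the right-hand side of coassociativity. -/
noncomputable def comulRight : V ⊗[R] C →ₗ[R] (V ⊗[R] C) ⊗[R] C :=
  (TensorProduct.assoc R V C C).symm.toLinearMap ∘ₗ (Coalgebra.comul (R := R) (A := C)).lTensor V

variable (R C V) in
/-- The map `id_V ⊗ ε`, with values in `V ⊗ R = V`. -/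
noncomputable def counitRight : V ⊗[R] C →ₗ[R] V :=
  (TensorProduct.rid R V).toLinearMap ∘ₗ (Coalgebra.counit (R := R) (A := C)).lTensor V

theorem comulRight_comp_rTensor (f : V →ₗ[R] W) :
    comulRight R C W ∘ₗ f.rTensor C = (f.rTensor C).rTensor C ∘ₗ comulRight R C V := by
  have hassoc : (f.rTensor C).rTensor C ∘ₗ (TensorProduct.assoc R V C C).symm.toLinearMap =
      (TensorProduct.assoc R W C C).symm.toLinearMap ∘ₗ f.rTensor (C ⊗[R] C) := by
    ext
    simp
  rw [comulRight, comulRight, ← LinearMap.comp_assoc, hassoc, LinearMap.comp_assoc,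
    LinearMap.comp_assoc, LinearMap.lTensor_comp_rTensor, LinearMap.rTensor_comp_lTensor]

theorem counitRight_comp_rTensor (f : V →ₗ[R] W) :
    counitRight R C W ∘ₗ f.rTensor C = f ∘ₗ counitRight R C V := by
  ext
  simp [counitRight]

end Coalgebra

section Bialgebra

variable {R H V W : Type*} [CommSemiring R] [Semiring H] [Bialgebra R H]
  [AddCommMonoid V] [Module R V] [AddCommMonoid W] [Module R W]

theorem comulRight_comp_tensorMul :
    comulRight R H (V ⊗[R] W) ∘ₗ tensorMul R H V W =
      (tensorMul R H V W).rTensor H ∘ₗ tensorMul R H (V ⊗[R] H) (W ⊗[R] H) ∘ₗ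
        TensorProduct.map (comulRight R H V) (comulRight R H W) := by
  have hcomul : (Coalgebra.comul (R := R) (A := H)).lTensor (V ⊗[R] W) ∘ₗ tensorMul R H V W =
      tensorMul R (H ⊗[R] H) V W ∘ₗ
        TensorProduct.map (Coalgebra.comul.lTensor V) (Coalgebra.comul.lTensor W) :=
    lTensor_comp_tensorMul (Bialgebra.comulAlgHom R H)
  have hassoc : (TensorProduct.assoc R (V ⊗[R] W) H H).symm.toLinearMap ∘ₗ
      tensorMul R (H ⊗[R] H) V W =
      (tensorMul R H V W).rTensor H ∘ₗ tensorMul R H (V ⊗[R] H) (W ⊗[R] H) ∘ₗ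
        TensorProduct.map (TensorProduct.assoc R V H H).symm.toLinearMap
          (TensorProduct.assoc R W H H).symm.toLinearMap := by
    ext
    simp
  simp only [comulRight, TensorProduct.map_comp, LinearMap.comp_assoc, hcomul]
  simp only [← LinearMap.comp_assoc, hassoc]

theorem counitRight_comp_tensorMul :
    counitRight R H (V ⊗[R] W) ∘ₗ tensorMul R H V W =
      TensorProduct.map (counitRight R H V) (counitRight R H W) := by
  have hcounit : (Coalgebra.counit (R := R) (A := H)).lTensor (V ⊗[R] W) ∘ₗ tensorMul R H V W =
      tensorMul R R V W ∘ₗ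
        TensorProduct.map (Coalgebra.counit.lTensor V) (Coalgebra.counit.lTensor W) :=
    lTensor_comp_tensorMul (Bialgebra.counitAlgHom R H)
  have hrid : (TensorProduct.rid R (V ⊗[R] W)).toLinearMap ∘ₗ tensorMul R R V W =
      TensorProduct.map (TensorProduct.rid R V).toLinearMap
        (TensorProduct.rid R W).toLinearMap := by
    ext
    simp
  simp only [counitRight, TensorProduct.map_comp, LinearMap.comp_assoc, hcounit]
  rw [← LinearMap.comp_assoc, hrid]

end Bialgebra

variable {k : Type} [Field k] {H : Type} [Ring H] [HopfAlgebra k H] {A B L M N : Comod k H}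

/-! ### Comodule maps -/

theorem IsHom.apply {f : M.X →ₗ[k] N.X} (hf : IsHom M N f) (x : M.X) :
    N.ρ (f x) = f.rTensor H (M.ρ x) :=
  LinearMap.congr_fun hf x

theorem IsHom.comp {f : L.X →ₗ[k] M.X} {g : M.X →ₗ[k] N.X} (hg : IsHom M N g)
    (hf : IsHom L M f) : IsHom L N (g ∘ₗ f) :=
  LinearMap.ext fun x => by
    simp only [LinearMap.comp_apply, hg.apply, hf.apply, LinearMap.rTensor_comp]

theorem IsHom.symm {e : M.X ≃ₗ[k] N.X} (he : IsHom M N e.toLinearMap) :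
    IsHom N M e.symm.toLinearMap := by
  refine LinearMap.ext fun y => ?_
  obtain ⟨x, rfl⟩ := e.surjective y
  change M.ρ (e.symm (e x)) = e.symm.toLinearMap.rTensor H (N.ρ (e.toLinearMap x))
  rw [he.apply, ← LinearMap.rTensor_comp_apply, LinearEquiv.symm_comp, LinearMap.rTensor_id_apply,
    e.symm_apply_apply]

theorem dsum_ρ_apply (x : M.X × N.X) :
    (M.dsum N).ρ x =
      (LinearMap.inl k M.X N.X).rTensor H (M.ρ x.1) +
        (LinearMap.inr k M.X N.X).rTensor H (N.ρ x.2) :=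
  rfl

theorem isHom_inl : IsHom M (M.dsum N) (LinearMap.inl k M.X N.X) :=
  LinearMap.ext fun x => (dsum_ρ_apply (x, 0)).trans (by simp; rfl)

theorem isHom_inr : IsHom N (M.dsum N) (LinearMap.inr k M.X N.X) :=
  LinearMap.ext fun x => (dsum_ρ_apply (0, x)).trans (by simp; rfl)

theorem IsHom.coprod {f : A.X →ₗ[k] M.X} {g : B.X →ₗ[k] M.X} (hf : IsHom A M f)
    (hg : IsHom B M g) : IsHom (A.dsum B) M (f.coprod g) :=
  LinearMap.ext fun x : A.X × B.X => by
    change M.ρ (f x.1 + g x.2) = (f.coprod g).rTensor H ((A.dsum B).ρ x)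
    simp [dsum_ρ_apply, ← LinearMap.rTensor_comp_apply, hf.apply, hg.apply]

theorem isHom_fst : IsHom (M.dsum N) M (LinearMap.fst k M.X N.X) :=
  LinearMap.ext fun x : M.X × N.X => by
    change M.ρ x.1 = (LinearMap.fst k M.X N.X).rTensor H ((M.dsum N).ρ x)
    simp [dsum_ρ_apply, ← LinearMap.rTensor_comp_apply]

theorem isHom_snd : IsHom (M.dsum N) N (LinearMap.snd k M.X N.X) :=
  LinearMap.ext fun x : M.X × N.X => by
    change N.ρ x.2 = (LinearMap.snd k M.X N.X).rTensor H ((M.dsum N).ρ x)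
    simp [dsum_ρ_apply, ← LinearMap.rTensor_comp_apply]

theorem DirectSummand.refl (M : Comod k H) : DirectSummand M M :=
  ⟨LinearMap.id, LinearMap.id, by simp [IsHom], by simp [IsHom], LinearMap.id_comp _⟩

theorem DirectSummand.trans (h : DirectSummand L M) (h' : DirectSummand M N) :
    DirectSummand L N := by
  obtain ⟨i, p, hi, hp, hpi⟩ := h
  obtain ⟨j, q, hj, hq, hqj⟩ := h'
  refine ⟨j ∘ₗ i, p ∘ₗ q, hj.comp hi, hp.comp hq, ?_⟩
  rw [LinearMap.comp_assoc, ← LinearMap.comp_assoc i, hqj, LinearMap.id_comp, hpi]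

theorem Iso.directSummand (h : Iso M N) : DirectSummand M N :=
  let ⟨e, he⟩ := h
  ⟨e, e.symm, he, he.symm, LinearMap.ext e.symm_apply_apply⟩

theorem directSummand_dsum_left : DirectSummand M (M.dsum N) :=
  ⟨_, _, isHom_inl, isHom_fst, LinearMap.fst_comp_inl k M.X N.X⟩

theorem directSummand_dsum_right : DirectSummand N (M.dsum N) :=
  ⟨_, _, isHom_inr, isHom_snd, LinearMap.snd_comp_inr k M.X N.X⟩

/-! ### The comodule axioms -/

theorem isComodule_iff :
    M.IsComodule ↔ M.ρ.rTensor H ∘ₗ M.ρ = comulRight k H M.X ∘ₗ M.ρ ∧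
      counitRight k H M.X ∘ₗ M.ρ = LinearMap.id :=
  Iff.rfl

/-- The failure of coassociativity of the coaction of `M`. It is natural in `M`, which is how
coassociativity is transported along comodule maps. -/
noncomputable def coassocDefect (M : Comod k H) : M.X →ₗ[k] (M.X ⊗[k] H) ⊗[k] H :=
  M.ρ.rTensor H ∘ₗ M.ρ - comulRight k H M.X ∘ₗ M.ρ

/-- The failure of counitality of the coaction of `M`, the counterpart of
`Comod.coassocDefect`. -/
noncomputable def counitDefect (M : Comod k H) : M.X →ₗ[k] M.X :=
  counitRight k H M.X ∘ₗ M.ρ - LinearMap.id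

theorem isComodule_iff_defect_eq_zero :
    M.IsComodule ↔ M.coassocDefect = 0 ∧ M.counitDefect = 0 :=
  isComodule_iff.trans
    (and_congr (sub_eq_zero (a := M.ρ.rTensor H ∘ₗ M.ρ)).symm sub_eq_zero.symm)

theorem IsHom.coassocDefect_apply {f : M.X →ₗ[k] N.X} (hf : IsHom M N f) (x : M.X) :
    N.coassocDefect (f x) = (f.rTensor H).rTensor H (M.coassocDefect x) := by
  have hcoact : N.ρ.rTensor H (f.rTensor H (M.ρ x)) =
      (f.rTensor H).rTensor H (M.ρ.rTensor H (M.ρ x)) := by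
    rw [← LinearMap.rTensor_comp_apply, hf, LinearMap.rTensor_comp_apply]
  have hcomul : comulRight k H N.X (f.rTensor H (M.ρ x)) =
      (f.rTensor H).rTensor H (comulRight k H M.X (M.ρ x)) :=
    LinearMap.congr_fun (comulRight_comp_rTensor f) (M.ρ x)
  simp only [coassocDefect, LinearMap.sub_apply, LinearMap.comp_apply, hf.apply, map_sub, hcoact,
    hcomul]

theorem IsHom.counitDefect_apply {f : M.X →ₗ[k] N.X} (hf : IsHom M N f) (x : M.X) :
    N.counitDefect (f x) = f (M.counitDefect x) := by
  have hcounit : counitRight k H N.X (f.rTensor H (M.ρ x)) = f (counitRight k H M.X (M.ρ x)) :=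
    LinearMap.congr_fun (counitRight_comp_rTensor f) (M.ρ x)
  simp only [counitDefect, LinearMap.sub_apply, LinearMap.comp_apply, hf.apply, map_sub, hcounit,
    LinearMap.id_apply]

theorem IsComodule.of_injective (hN : N.IsComodule) {f : M.X →ₗ[k] N.X} (hf : IsHom M N f)
    (hinj : Function.Injective f) : M.IsComodule := by
  rw [isComodule_iff_defect_eq_zero] at hN ⊢
  have hinj₂ : Function.Injective ((f.rTensor H).rTensor H) :=
    Module.Flat.rTensor_preserves_injective_linearMap _
      (Module.Flat.rTensor_preserves_injective_linearMap _ hinj)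
  constructor
  · refine LinearMap.ext fun x => hinj₂ ?_
    simp [← hf.coassocDefect_apply, hN.1]
  · refine LinearMap.ext fun x => hinj ?_
    simp [← hf.counitDefect_apply, hN.2]

theorem IsComodule.dsum (hM : M.IsComodule) (hN : N.IsComodule) : (M.dsum N).IsComodule := by
  rw [isComodule_iff_defect_eq_zero] at hM hN ⊢
  constructor
  · apply LinearMap.prod_ext <;> refine LinearMap.ext fun x => ?_
    · exact (isHom_inl.coassocDefect_apply x).trans (by rw [hM.1]; exact map_zero _)
    · exact (isHom_inr.coassocDefect_apply x).trans (by rw [hN.1]; exact map_zero _)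
  · apply LinearMap.prod_ext <;> refine LinearMap.ext fun x => ?_
    · exact (isHom_inl.counitDefect_apply x).trans (by rw [hM.2]; exact map_zero _)
    · exact (isHom_inr.counitDefect_apply x).trans (by rw [hN.2]; exact map_zero _)

theorem isComodule_unit : (unit k H).IsComodule := by
  constructor
  · refine LinearMap.ext_ring ?_
    change ((1 : k) ⊗ₜ[k] (1 : H)) ⊗ₜ[k] (1 : H) =
      (TensorProduct.assoc k k H H).symm (1 ⊗ₜ Coalgebra.comul (R := k) (1 : H))
    simp [Algebra.TensorProduct.one_def]
  · refine LinearMap.ext_ring ?_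
    change TensorProduct.rid k k (1 ⊗ₜ Coalgebra.counit (R := k) (1 : H)) = 1
    simp

theorem IsComodule.tensor (hM : M.IsComodule) (hN : N.IsComodule) :
    (M.tensor N).IsComodule := by
  obtain ⟨hMcoassoc, hMcounit⟩ := isComodule_iff.1 hM
  obtain ⟨hNcoassoc, hNcounit⟩ := isComodule_iff.1 hN
  let τ := tensorMul k H M.X N.X
  let ρ₂ := TensorProduct.map M.ρ N.ρ
  constructor
  · calc (τ ∘ₗ ρ₂).rTensor H ∘ₗ τ ∘ₗ ρ₂
      _ = τ.rTensor H ∘ₗ (ρ₂.rTensor H ∘ₗ τ) ∘ₗ ρ₂ := by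
          simp only [LinearMap.rTensor_comp, LinearMap.comp_assoc]
      _ = τ.rTensor H ∘ₗ tensorMul k H _ _ ∘ₗ
            TensorProduct.map (M.ρ.rTensor H ∘ₗ M.ρ) (N.ρ.rTensor H ∘ₗ N.ρ) := by
          rw [rTensor_map_comp_tensorMul, TensorProduct.map_comp, LinearMap.comp_assoc]
      _ = τ.rTensor H ∘ₗ tensorMul k H _ _ ∘ₗ
            TensorProduct.map (comulRight k H M.X ∘ₗ M.ρ) (comulRight k H N.X ∘ₗ N.ρ) := by
          rw [hMcoassoc, hNcoassoc]
      _ = (comulRight k H (M.X ⊗[k] N.X) ∘ₗ τ) ∘ₗ ρ₂ := by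
          rw [comulRight_comp_tensorMul, TensorProduct.map_comp]
          simp only [LinearMap.comp_assoc, ρ₂, τ]
  · calc (counitRight k H (M.X ⊗[k] N.X) ∘ₗ τ) ∘ₗ ρ₂
      _ = TensorProduct.map (counitRight k H M.X ∘ₗ M.ρ) (counitRight k H N.X ∘ₗ N.ρ) := by
          rw [counitRight_comp_tensorMul, TensorProduct.map_comp]
      _ = LinearMap.id := by rw [hMcounit, hNcounit, TensorProduct.map_id]

instance [FiniteDimensional k M.X] [FiniteDimensional k N.X] :
    FiniteDimensional k (M.dsum N).X :=
  inferInstanceAs (FiniteDimensional k (M.X × N.X))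

instance [FiniteDimensional k M.X] [FiniteDimensional k N.X] :
    FiniteDimensional k (M.tensor N).X :=
  inferInstanceAs (FiniteDimensional k (M.X ⊗[k] N.X))

instance : FiniteDimensional k (unit k H).X :=
  inferInstanceAs (FiniteDimensional k k)

instance finiteDimensional_tpow (M : Comod k H) [hM : FiniteDimensional k M.X] :
    ∀ n, FiniteDimensional k (M.tpow n).X
  | 0 => inferInstanceAs (FiniteDimensional k (unit k H).X)
  | 1 => hM
  | n + 2 =>
    have := finiteDimensional_tpow M (n + 1)
    inferInstanceAs (FiniteDimensional k ((M.tpow (n + 1)).tensor M).X)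

theorem IsComodule.tpow (hM : M.IsComodule) : ∀ n, (M.tpow n).IsComodule
  | 0 => isComodule_unit
  | 1 => hM
  | n + 2 => (hM.tpow (n + 1)).tensor hM

/-! ### Decomposition into simple comodules -/

/-- The subspace `N` of `M` as a comodule, with coaction `M.ρ` followed by the projection onto `N`
along a complement `N'`. When `N` is a subcomodule this is the restriction of `M.ρ`, whatever
the complement. -/
noncomputable def restrict (M : Comod k H) {N N' : Submodule k M.X} (h : IsCompl N N') :
    Comod k H where
  X := N
  ρ := (N.projectionOnto N' h).rTensor H ∘ₗ M.ρ ∘ₗ N.subtype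

theorem IsSubcomodule.isHom_subtype {N N' : Submodule k M.X} (hN : M.IsSubcomodule N)
    (h : IsCompl N N') : IsHom (M.restrict h) M N.subtype := by
  refine LinearMap.ext fun x => ?_
  obtain ⟨y, hy⟩ := hN x.1 x.2
  have hproj : N.projectionOnto N' h ∘ₗ N.subtype = LinearMap.id := by ext; simp
  change M.ρ x.1 = N.subtype.rTensor H ((N.projectionOnto N' h).rTensor H (M.ρ x.1))
  rw [← hy, ← LinearMap.comp_apply (LinearMap.rTensor H (N.projectionOnto N' h)),
    ← LinearMap.rTensor_comp, hproj, LinearMap.rTensor_id_apply]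

theorem iso_dsum_restrict {N N' : Submodule k M.X} (hN : M.IsSubcomodule N)
    (hN' : M.IsSubcomodule N') (h : IsCompl N N') :
    Iso ((M.restrict h).dsum (M.restrict h.symm)) M := by
  refine ⟨N.prodEquivOfIsCompl N' h, ?_⟩
  exact (hN.isHom_subtype h).coprod (hN'.isHom_subtype h.symm)

theorem exists_isSubcomodule_of_not_isSimple (hM : M.IsComodule) [FiniteDimensional k M.X]
    [Nontrivial M.X] (hs : ¬ M.IsSimple) :
    ∃ N : Submodule k M.X, M.IsSubcomodule N ∧ N ≠ ⊥ ∧ N ≠ ⊤ := by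
  by_contra! h
  exact hs ⟨hM, ‹_›, ‹_›, fun N hN => or_iff_not_imp_left.2 (h N hN)⟩

end Comod

open Comod in
theorem IsCosemisimple.induction {k : Type} [Field k] {H : Type} [Ring H] [HopfAlgebra k H]
    (hH : IsCosemisimple k H) {P : Comod k H → Prop}
    (simple : ∀ S, S.IsSimple → P S)
    (dsum : ∀ A B M : Comod k H, A.IsComodule → B.IsComodule → M.IsComodule →
      FiniteDimensional k A.X → FiniteDimensional k B.X → FiniteDimensional k M.X →
      Iso (A.dsum B) M → P A → P B → P M)
    (M : Comod k H) (hM : M.IsComodule) [FiniteDimensional k M.X] [Nontrivial M.X] : P M := by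
  induction hd : Module.finrank k M.X using Nat.strong_induction_on generalizing M with
  | _ d ih =>
    by_cases hs : M.IsSimple
    · exact simple M hs
    obtain ⟨N, hN, hbot, htop⟩ := exists_isSubcomodule_of_not_isSimple hM hs
    obtain ⟨N', hN', h⟩ := hH M hM N hN
    have : Nontrivial (M.restrict h).X := Submodule.nontrivial_iff_ne_bot.2 hbot
    have : Nontrivial (M.restrict h.symm).X := Submodule.nontrivial_iff_ne_bot.2
      fun h0 => htop (by simpa [h0] using h.sup_eq_top)
    have : FiniteDimensional k (M.restrict h).X := inferInstanceAs (FiniteDimensional k N)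
    have : FiniteDimensional k (M.restrict h.symm).X := inferInstanceAs (FiniteDimensional k N')
    have hA := hM.of_injective (hN.isHom_subtype h) N.injective_subtype
    have hB := hM.of_injective (hN'.isHom_subtype h.symm) N'.injective_subtype
    have hadd : Module.finrank k (M.restrict h).X + Module.finrank k (M.restrict h.symm).X = d :=
      (Submodule.finrank_add_eq_of_isCompl h).trans hd
    have hApos : 0 < Module.finrank k (M.restrict h).X := Module.finrank_pos
    have hBpos : 0 < Module.finrank k (M.restrict h.symm).X := Module.finrank_pos
    exact dsum _ _ M hA hB hM ‹_› ‹_› ‹_› (iso_dsum_restrict hN hN' h)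
      (ih _ (by omega) _ hA rfl) (ih _ (by omega) _ hB rfl)

namespace GrSemiring

open Comod

variable {k : Type} [Field k] {H : Type} [Ring H] [HopfAlgebra k H] (G : GrSemiring k H)
  {M N : Comod k H}

/-! ### The dimension function of a Grothendieck semiring -/

theorem cls_tpow (hM : M.IsComodule) [FiniteDimensional k M.X] :
    ∀ n, G.cls (M.tpow n) = G.cls M ^ n
  | 0 => by rw [pow_zero]; exact G.cls_one
  | 1 => (pow_one _).symm
  | n + 2 => by
    rw [pow_succ, ← cls_tpow hM (n + 1)]
    exact G.cls_tensor _ _ (hM.tpow _) hM inferInstance inferInstance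

/-- A chosen finite-dimensional comodule of class `r`. -/
noncomputable def rep (r : G.R) : Comod k H :=
  (G.cls_surj r).choose

theorem isComodule_rep (r : G.R) : (G.rep r).IsComodule :=
  (G.cls_surj r).choose_spec.1

instance (r : G.R) : FiniteDimensional k (G.rep r).X :=
  (G.cls_surj r).choose_spec.2.1

theorem cls_rep (r : G.R) : G.cls (G.rep r) = r :=
  (G.cls_surj r).choose_spec.2.2

theorem finrank_rep_cls (hM : M.IsComodule) [FiniteDimensional k M.X] :
    Module.finrank k (G.rep (G.cls M)).X = Module.finrank k M.X :=
  let ⟨e, _⟩ := G.cls_inj _ M (G.isComodule_rep _) hM inferInstance ‹_› (G.cls_rep _)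
  e.finrank_eq

theorem finrank_rep_add (r s : G.R) :
    Module.finrank k (G.rep (r + s)).X =
      Module.finrank k (G.rep r).X + Module.finrank k (G.rep s).X := by
  have hr := G.isComodule_rep r
  have hs := G.isComodule_rep s
  calc Module.finrank k (G.rep (r + s)).X
      = Module.finrank k (G.rep (G.cls ((G.rep r).dsum (G.rep s)))).X := by
        rw [G.cls_dsum _ _ hr hs inferInstance inferInstance, G.cls_rep, G.cls_rep]
    _ = Module.finrank k ((G.rep r).X × (G.rep s).X) := G.finrank_rep_cls (hr.dsum hs)
    _ = _ := Module.finrank_prod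

theorem finrank_rep_mul (r s : G.R) :
    Module.finrank k (G.rep (r * s)).X =
      Module.finrank k (G.rep r).X * Module.finrank k (G.rep s).X := by
  have hr := G.isComodule_rep r
  have hs := G.isComodule_rep s
  calc Module.finrank k (G.rep (r * s)).X
      = Module.finrank k (G.rep (G.cls ((G.rep r).tensor (G.rep s)))).X := by
        rw [G.cls_tensor _ _ hr hs inferInstance inferInstance, G.cls_rep, G.cls_rep]
    _ = Module.finrank k ((G.rep r).X ⊗[k] (G.rep s).X) := G.finrank_rep_cls (hr.tensor hs)
    _ = _ := Module.finrank_tensorProduct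

/-- The dimension function `d_H` of the measured Grothendieck semiring `R_+(H)`, computed on chosen
representatives; see `GrSemiring.dim_cls`. -/
noncomputable def dim : G.R →+* ℕ where
  toFun r := Module.finrank k (G.rep r).X
  map_zero' := by
    have h := G.finrank_rep_add 0 0
    rw [add_zero] at h
    omega
  map_one' := by
    rw [← G.cls_one, G.finrank_rep_cls isComodule_unit]
    exact Module.finrank_self k
  map_add' := G.finrank_rep_add
  map_mul' := G.finrank_rep_mul

theorem dim_cls (hM : M.IsComodule) [FiniteDimensional k M.X] :
    G.dim (G.cls M) = Module.finrank k M.X :=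
  G.finrank_rep_cls hM

theorem dim_eq_zero_iff {r : G.R} : G.dim r = 0 ↔ r = 0 := by
  refine ⟨fun h => ?_, fun h => h ▸ map_zero G.dim⟩
  have : Subsingleton (G.rep r).X := Module.finrank_zero_iff.1 h
  have hdim : Module.finrank k (G.rep r).X = Module.finrank k (G.rep 0).X :=
    h.trans (map_zero G.dim).symm
  rw [← G.cls_rep r, ← G.cls_rep 0]
  exact G.cls_iso _ _ (G.isComodule_rep r) (G.isComodule_rep 0) inferInstance inferInstance
    ⟨LinearEquiv.ofFinrankEq _ _ hdim, LinearMap.ext fun x => by simp [Subsingleton.elim x 0]⟩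

theorem cls_ne_zero (hM : M.IsComodule) [FiniteDimensional k M.X] [Nontrivial M.X] :
    G.cls M ≠ 0 := by
  rw [Ne, ← G.dim_eq_zero_iff, G.dim_cls hM]
  exact Module.finrank_pos.ne'

theorem exists_isSimple_finrank_le_mul (hH : IsCosemisimple k H) (w : G.R →+ ℕ)
    (hw : ∀ r, w r = 0 → r = 0) (hM : M.IsComodule) [FiniteDimensional k M.X] [Nontrivial M.X] :
    ∃ S : Comod k H, S.IsSimple ∧ DirectSummand S M ∧
      Module.finrank k M.X ≤ Module.finrank k S.X * w (G.cls M) := by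
  refine hH.induction (P := fun M => ∃ S : Comod k H, S.IsSimple ∧ DirectSummand S M ∧
    Module.finrank k M.X ≤ Module.finrank k S.X * w (G.cls M)) ?_ ?_ M hM
  · intro S hS
    have ⟨hSc, _, _, _⟩ := hS
    have hpos : 0 < w (G.cls S) := Nat.pos_of_ne_zero fun h => G.cls_ne_zero hSc (hw _ h)
    exact ⟨S, hS, .refl S, Nat.le_mul_of_pos_right _ hpos⟩
  · rintro A B M hA hB hM _ _ _ e ⟨S, hS, hSA, hSle⟩ ⟨T, hT, hTB, hTle⟩
    have hcls : G.cls M = G.cls A + G.cls B := by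
      rw [← G.cls_dsum A B hA hB ‹_› ‹_›]
      exact (G.cls_iso _ _ (hA.dsum hB) hM inferInstance ‹_› e).symm
    have hdim : Module.finrank k M.X = Module.finrank k A.X + Module.finrank k B.X := by
      rw [← G.dim_cls hM, hcls, map_add, G.dim_cls hA, G.dim_cls hB]
    simp only [hcls, hdim, map_add, mul_add]
    rcases le_total (Module.finrank k S.X) (Module.finrank k T.X) with h | h
    · refine ⟨T, hT, (hTB.trans directSummand_dsum_right).trans e.directSummand, ?_⟩
      exact add_le_add (hSle.trans (Nat.mul_le_mul_right _ h)) hTle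
    · refine ⟨S, hS, (hSA.trans directSummand_dsum_left).trans e.directSummand, ?_⟩
      exact add_le_add hSle (hTle.trans (Nat.mul_le_mul_right _ h))

end GrSemiring

theorem stmt7_general (k : Type) [Field k]
    (H : Type) [Ring H] [HopfAlgebra k H]
    (K : Type) [Ring K] [HopfAlgebra k K]
    (hH : IsCosemisimple k H)
    (GH : GrSemiring k H) (GK : GrSemiring k K)
    (f : GH.R →+* GK.R) (hf : ∀ r, f r = 0 → r = 0)
    (X : Comod k H) (hX : X.IsComodule) [FiniteDimensional k X.X] [Nontrivial X.X]
    (X' : Comod k K) (hX' : X'.IsComodule) [FiniteDimensional k X'.X]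
    (hcls : GK.cls X' = f (GH.cls X)) (n : ℕ) :
    ∃ Sn : Comod k H, Sn.IsSimple ∧ Comod.DirectSummand Sn (X.tpow n) ∧
      ((Module.finrank k X.X : ℝ) / (Module.finrank k X'.X : ℝ)) ^ n ≤
        (Module.finrank k Sn.X : ℝ) := by
  have hw : ∀ r, GK.dim (f r) = 0 → r = 0 := fun r h => hf r (GK.dim_eq_zero_iff.1 h)
  have hdim : Module.finrank k (X.tpow n).X = Module.finrank k X.X ^ n := by
    rw [← GH.dim_cls (hX.tpow n), GH.cls_tpow hX, map_pow, GH.dim_cls hX]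
  have hdim' : GK.dim (f (GH.cls (X.tpow n))) = Module.finrank k X'.X ^ n := by
    rw [GH.cls_tpow hX, map_pow, map_pow, ← hcls, GK.dim_cls hX']
  have : Nontrivial (X.tpow n).X :=
    Module.nontrivial_of_finrank_pos (R := k) (hdim ▸ pow_pos Module.finrank_pos n)
  obtain ⟨S, hS, hSX, hle⟩ := GH.exists_isSimple_finrank_le_mul hH
    (GK.dim.comp f : GH.R →+ ℕ) hw (hX.tpow n)
  change _ ≤ _ * GK.dim (f _) at hle
  rw [hdim, hdim'] at hle
  refine ⟨S, hS, hSX, ?_⟩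
  rw [div_pow]
  exact div_le_of_le_mul₀ (by positivity) (by positivity) (mod_cast hle)

/-- key step in the proof of Lemma 3.6.  Let `H`, `K` be
cosemisimple Hopf algebras over an algebraically closed field with a semiring
isomorphism `f : R_+(H) ≅ R_+(K)`, and let `[X] ∈ R_+(H)` be a class with
`dim X > dim f([X])`.  Then for every `n ≥ 1` there is a simple `H`-comodule
`S_n` which is a direct summand of `X^{⊗ n}` and satisfies
`dim S_n ≥ (dim X / dim f(X))^n`. -/
theorem stmt7 (k : Type) [Field k] [IsAlgClosed k]
    (H : Type) [Ring H] [HopfAlgebra k H]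
    (K : Type) [Ring K] [HopfAlgebra k K]
    (hH : IsCosemisimple k H) (hK : IsCosemisimple k K)
    (GH : GrSemiring k H) (GK : GrSemiring k K)
    (f : GH.R ≃+* GK.R)
    (X : Comod k H) (hX : X.IsComodule) (hXfd : FiniteDimensional k X.X)
    (X' : Comod k K) (hX' : X'.IsComodule) (hX'fd : FiniteDimensional k X'.X)
    (hcls : GK.cls X' = f (GH.cls X))
    (hdim : Module.finrank k X'.X < Module.finrank k X.X)
    (n : ℕ) (hn : 1 ≤ n) :
    ∃ Sn : Comod k H, Sn.IsSimple ∧ Comod.DirectSummand Sn (X.tpow n) ∧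
      ((Module.finrank k X.X : ℝ) / (Module.finrank k X'.X : ℝ)) ^ n ≤
        (Module.finrank k Sn.X : ℝ) := by
  have : Nontrivial X.X := Module.nontrivial_of_finrank_pos (R := k) (pos_of_gt hdim)
  exact stmt7_general k H K hH GH GK f (by simp) X hX X' hX' hcls n
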